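/- Asymptotic Markov chains at later hops: under the K-hop change of measure with liminf_{n→∞} Δ_k > 0, and with U_ℓ := (M̃_ℓ, Ỹ₀^{T−1},…,Ỹ_k^{T−1}, T) and Ỹ_j := Ỹ_{j,T}, for every ℓ ∈ {2,…,k}: lim_{n→∞} I(Ỹ_ℓ,…,Ỹ_k; U_ℓ | Ỹ₀,…,Ỹ_{ℓ−1}) = 0, and consequently lim_{n→∞} I(U_ℓ; Ỹ_ℓ | Ỹ_{ℓ−1}) = 0. -/

import Mathlib

open Filter

noncomputable section

/-- `p` is a probability mass function on the finite alphabet `α`. -/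
def IsPMF {α : Type*} [Fintype α] (p : α → ℝ) : Prop :=
  (∀ a, 0 ≤ p a) ∧ ∑ a, p a = 1

open Classical in
/-- Probability that the random variable `X` takes the value `a`, under the pmf `p`. -/
def probEq {Ω α : Type*} [Fintype Ω] (p : Ω → ℝ) (X : Ω → α) (a : α) : ℝ :=
  ∑ ω, if X ω = a then p ω else 0

/-- Shannon entropy (base 2) of the random variable `X` under the pmf `p`. -/
def entOf {Ω α : Type*} [Fintype Ω] (p : Ω → ℝ) (X : Ω → α) : ℝ :=
  -∑ ω, p ω * Real.logb 2 (probEq p X (X ω))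

/-- Conditional Shannon entropy `H(X | Y)` under the pmf `p`. -/
def condEntOf {Ω α β : Type*} [Fintype Ω] (p : Ω → ℝ) (X : Ω → α) (Y : Ω → β) : ℝ :=
  entOf p (fun ω => (X ω, Y ω)) - entOf p Y

/-- Mutual information `I(X ; Y)` under the pmf `p`. -/
def miOf {Ω α β : Type*} [Fintype Ω] (p : Ω → ℝ) (X : Ω → α) (Y : Ω → β) : ℝ :=
  entOf p X + entOf p Y - entOf p (fun ω => (X ω, Y ω))

/-- Conditional mutual information `I(X ; Y | Z)` under the pmf `p`. -/
def condMIOf {Ω α β γ : Type*} [Fintype Ω] (p : Ω → ℝ) (X : Ω → α) (Y : Ω → β)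
    (Z : Ω → γ) : ℝ :=
  condEntOf p X Z + condEntOf p Y Z - condEntOf p (fun ω => (X ω, Y ω)) Z

open Classical in
/-- Probability of the set `S` under the pmf `p`. -/
def probSet {Ω : Type*} [Fintype Ω] (p : Ω → ℝ) (S : Set Ω) : ℝ :=
  ∑ ω, if ω ∈ S then p ω else 0

open Classical in
/-- Number of occurrences of the symbol `a` in the sequence `w`. -/
def Ncount {W : Type*} {n : ℕ} (w : Fin n → W) (a : W) : ℕ :=
  (Finset.univ.filter (fun i => w i = a)).card

/-- The strongly typical set `T_μ⁽ⁿ⁾(P)`. -/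
def typicalSet {W : Type*} [Fintype W] (P : W → ℝ) (μ : ℝ) (n : ℕ) : Set (Fin n → W) :=
  {w | ∀ a, |((Ncount w a : ℝ)) / n - P a| ≤ μ ∧ (P a = 0 → Ncount w a = 0)}

/-- The typicality parameter `μ_n = n^{-1/3}`. -/
def μseq (n : ℕ) : ℝ := (n : ℝ) ^ (-(1/3 : ℝ))

section KHop

variable (k : ℕ) (Y : ℕ → Type) [∀ i, Fintype (Y i)] [∀ i, Nonempty (Y i)]

/-- The index `j` viewed as an element of `Fin (k+1)`. -/
def idxLo (j : Fin k) : Fin (k + 1) := ⟨(j : ℕ), Nat.lt_succ_of_lt j.isLt⟩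

/-- The index `j+1` viewed as an element of `Fin (k+1)`. -/
def idxHi (j : Fin k) : Fin (k + 1) := ⟨(j : ℕ) + 1, Nat.succ_lt_succ j.isLt⟩

variable (P : (∀ i : Fin (k + 1), Y i) → ℝ)

/-- The i.i.d. law of the source tuple `(Y₀ⁿ,…,Y_kⁿ)` under hypothesis `H = 0`. -/
def iidK (n : ℕ) (ys : ∀ i : Fin (k + 1), Fin n → Y i) : ℝ :=
  ∏ t : Fin n, P (fun i => ys i t)

open Classical in
/-- The marginal pmf of `Y_i` under `P`. -/
def margK (i : Fin (k + 1)) (c : Y i) : ℝ :=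
  ∑ y : ∀ i : Fin (k + 1), Y i, if y i = c then P y else 0

/-- The product of the marginals `P_{Y₀}·P_{Y₁}⋯P_{Y_k}`. -/
def prodMargK (y : ∀ i : Fin (k + 1), Y i) : ℝ := ∏ i, margK k Y P i (y i)

/-- The i.i.d. law of the source tuple under hypothesis `H = 1` (product of marginals). -/
def iidQK (n : ℕ) (ys : ∀ i : Fin (k + 1), Fin n → Y i) : ℝ :=
  ∏ t : Fin n, prodMargK k Y P (fun i => ys i t)

open Classical in
/-- The pairwise marginal `P_{Y_j Y_{j+1}}` of `P`. -/
def pairMargK (j : Fin k) (a : Y (j : ℕ)) (b : Y ((j : ℕ) + 1)) : ℝ :=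
  ∑ y : ∀ i : Fin (k + 1), Y i, if y (idxLo k j) = a ∧ y (idxHi k j) = b then P y else 0

open Classical in
/-- `P` forms the Markov chain `Y₀ → Y₁ → ⋯ → Y_k`. -/
def IsMarkovChainK : Prop :=
  ∀ y : ∀ i : Fin (k + 1), Y i,
    P y * ∏ i ∈ Finset.univ.filter (fun i : Fin (k + 1) => 0 < (i : ℕ) ∧ (i : ℕ) < k),
        margK k Y P i (y i)
      = ∏ j : Fin k, pairMargK k Y P j (y (idxLo k j)) (y (idxHi k j))

/-- Extension of a source tuple to all natural indices (junk beyond `k`). -/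
def extendTup (n : ℕ) (ys : ∀ i : Fin (k + 1), Fin n → Y i) (ℓ : ℕ) : Fin n → Y ℓ :=
  if h : ℓ < k + 1 then ys ⟨ℓ, h⟩ else fun _ => Classical.arbitrary (Y ℓ)

/-- The messages computed recursively from the encoders:
`msgRec φ ys' ℓ` is the message `M_{ℓ+1}`. -/
def msgRec (n : ℕ) (φ : ∀ ℓ : ℕ, (Fin n → Y ℓ) → ℕ → ℕ)
    (ys' : ∀ ℓ : ℕ, Fin n → Y ℓ) : ℕ → ℕ
  | 0 => φ 0 (ys' 0) 0
  | (ℓ + 1) => φ (ℓ + 1) (ys' (ℓ + 1)) (msgRec n φ ys' ℓ)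

/-- A source tuple viewed as one sequence over the product alphabet. -/
def tupleSeq {n : ℕ} (ys : ∀ i : Fin (k + 1), Fin n → Y i) :
    Fin n → (∀ i : Fin (k + 1), Y i) :=
  fun t i => ys i t

/-- The acceptance region `A_k` of the decision center `R_k`: the tuples on which the
guess is `Ĥ_k = 0` (decision `false`). -/
def acceptSet (n : ℕ) (φ : ∀ ℓ : ℕ, (Fin n → Y ℓ) → ℕ → ℕ)
    (g : (Fin n → Y k) → ℕ → Bool) : Set (∀ i : Fin (k + 1), Fin n → Y i) :=
  {ys | g (extendTup k Y n ys k) (msgRec Y n φ (extendTup k Y n ys) (k - 1)) = false}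

/-- The set `D_k`: the acceptance region intersected with the strongly typical set. -/
def DsetCM (n : ℕ) (φ : ∀ ℓ : ℕ, (Fin n → Y ℓ) → ℕ → ℕ)
    (g : (Fin n → Y k) → ℕ → Bool) : Set (∀ i : Fin (k + 1), Fin n → Y i) :=
  acceptSet k Y n φ g ∩ {ys | tupleSeq k Y ys ∈ typicalSet P (μseq n) n}

/-- `Δ_k = Pr[(Y₀ⁿ,…,Y_kⁿ) ∈ D_k]` under `H = 0`. -/
def DeltaCM (n : ℕ) (φ : ∀ ℓ : ℕ, (Fin n → Y ℓ) → ℕ → ℕ)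
    (g : (Fin n → Y k) → ℕ → Bool) : ℝ :=
  probSet (iidK k Y P n) (DsetCM k Y P n φ g)

open Classical in
/-- The change-of-measure pmf of `(Ỹ₀ⁿ,…,Ỹ_kⁿ)`: the `H = 0` law conditioned on `D_k`. -/
def ptildeCM (n : ℕ) (φ : ∀ ℓ : ℕ, (Fin n → Y ℓ) → ℕ → ℕ)
    (g : (Fin n → Y k) → ℕ → Bool) (ys : ∀ i : Fin (k + 1), Fin n → Y i) : ℝ :=
  if ys ∈ DsetCM k Y P n φ g then iidK k Y P n ys / DeltaCM k Y P n φ g else 0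

/-- The pmf of `((Ỹ₀ⁿ,…,Ỹ_kⁿ), T)` with `T` uniform on `{1,…,n}` independent of the rest. -/
def pfullCM (n : ℕ) (φ : ∀ ℓ : ℕ, (Fin n → Y ℓ) → ℕ → ℕ)
    (g : (Fin n → Y k) → ℕ → Bool)
    (ω : (∀ i : Fin (k + 1), Fin n → Y i) × Fin n) : ℝ :=
  ptildeCM k Y P n φ g ω.1 / n

/-- The random variable `M̃_{j+1}` (the message of hop `j+1` applied to the tilde sources). -/
def MtilRV (n : ℕ) (φ : ∀ ℓ : ℕ, (Fin n → Y ℓ) → ℕ → ℕ) (j : ℕ)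
    (ω : (∀ i : Fin (k + 1), Fin n → Y i) × Fin n) : ℕ :=
  msgRec Y n φ (extendTup k Y n ω.1) j

open Classical in
/-- The prefixes `(Ỹ₀^{T−1},…,Ỹ_k^{T−1})` as a random variable. -/
def prefixAll (n : ℕ) (ω : (∀ i : Fin (k + 1), Fin n → Y i) × Fin n) :
    ∀ i : Fin (k + 1), Fin n → Option (Y i) :=
  fun i t => if (t : ℕ) < (ω.2 : ℕ) then some (ω.1 i t) else none

/-- The auxiliary random variable `U_{j+1} := (M̃_{j+1}, Ỹ₀^{T−1},…,Ỹ_k^{T−1}, T)`. -/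
def UvarCM (n : ℕ) (φ : ∀ ℓ : ℕ, (Fin n → Y ℓ) → ℕ → ℕ) (j : ℕ)
    (ω : (∀ i : Fin (k + 1), Fin n → Y i) × Fin n) :
    ℕ × (∀ i : Fin (k + 1), Fin n → Option (Y i)) × Fin n :=
  (MtilRV k Y n φ j ω, prefixAll k Y n ω, ω.2)

/-- The type-I error probability `α_{k,n} = Pr[Ĥ_k = 1 | H = 0]`. -/
def alphaCM (n : ℕ) (φ : ∀ ℓ : ℕ, (Fin n → Y ℓ) → ℕ → ℕ)
    (g : (Fin n → Y k) → ℕ → Bool) : ℝ :=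
  probSet (iidK k Y P n) ((acceptSet k Y n φ g)ᶜ)

/-- The type-II error probability `β_{k,n} = Pr[Ĥ_k = 0 | H = 1]`. -/
def betaCM (n : ℕ) (φ : ∀ ℓ : ℕ, (Fin n → Y ℓ) → ℕ → ℕ)
    (g : (Fin n → Y k) → ℕ → Bool) : ℝ :=
  probSet (iidQK k Y P n) (acceptSet k Y n φ g)

end KHop

/-! Conditioning an i.i.d. sequence on an event of probability `Δ` inflates probabilities by at most
`1 / Δ`, so every information-theoretic cost it causes is at most `log (1 / Δ)`, hence
`log (1 / Δ) / n` per letter.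

Let `S = (Ãⁿ, Ỹ^{T-1}, T)`, where `Ỹ` is the whole tuple of sources and `Ã` its part up to the
current hop; `S` determines both `U` and `Ã_T`. By the chain rule `H(Ỹ_T | S) = H(Ỹⁿ | Ãⁿ) / n`,
which is at least the cross entropy of `P_{Y|A}` minus `log (1 / Δ) / n`. Conversely, Gibbs'
inequality bounds `H(X̃ | Z̃)` and `H(Ỹ_T | X̃, Ã_T)` above by the cross entropies of `P_{X|Z}` and
`P_{Y|X,A}`. When `X → Z → A` these two add up to the cross entropy of `P_{Y|A}`, which leaves
`I(X̃; U | Z̃) ≤ H(X̃ | Z̃) - H(X̃ | S) ≤ log (1 / Δ) / n`. -/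

section ProbEq

variable {Ω α β : Type*} [Fintype Ω] {p : Ω → ℝ}

theorem probEq_nonneg (hp : ∀ ω, 0 ≤ p ω) (X : Ω → α) (a : α) : 0 ≤ probEq p X a := by
  classical
  exact Finset.sum_nonneg fun ω _ => ite_nonneg (hp ω) le_rfl

theorem le_probEq_apply (hp : ∀ ω, 0 ≤ p ω) (X : Ω → α) (ω : Ω) : p ω ≤ probEq p X (X ω) := by
  classical
  calc p ω = if X ω = X ω then p ω else 0 := (if_pos rfl).symm
    _ ≤ probEq p X (X ω) := Finset.single_le_sum (f := fun ω' => if X ω' = X ω then p ω' else 0)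
      (fun ω' _ => ite_nonneg (hp ω') le_rfl) (Finset.mem_univ ω)

theorem probEq_apply_pos (hp : ∀ ω, 0 ≤ p ω) (X : Ω → α) {ω : Ω} (hω : p ω ≠ 0) :
    0 < probEq p X (X ω) :=
  ((hp ω).lt_of_ne' hω).trans_le (le_probEq_apply hp X ω)

theorem probEq_apply_of_injective (p : Ω → ℝ) {X : Ω → α} (hX : X.Injective) (ω : Ω) :
    probEq p X (X ω) = p ω := by
  classical
  simp [probEq, hX.eq_iff]

theorem probEq_apply_congr (p : Ω → ℝ) {X : Ω → α} {Y : Ω → β}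
    (h : ∀ ω ω', X ω = X ω' ↔ Y ω = Y ω') (ω : Ω) :
    probEq p X (X ω) = probEq p Y (Y ω) := by
  classical
  simp only [probEq, h]

theorem sum_probEq [Fintype α] (p : Ω → ℝ) (X : Ω → α) : ∑ a, probEq p X a = ∑ ω, p ω := by
  classical
  simp only [probEq]
  rw [Finset.sum_comm]
  simp

theorem sum_probEq_prodMk [Fintype α] (p : Ω → ℝ) (X : Ω → α) (Y : Ω → β) (b : β) :
    ∑ a, probEq p (fun ω => (X ω, Y ω)) (a, b) = probEq p Y b := by
  classical
  simp only [probEq]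
  rw [Finset.sum_comm]
  refine Finset.sum_congr rfl fun ω _ => ?_
  by_cases h : Y ω = b <;> simp [h]

theorem sum_mul_comp_eq_sum_image [DecidableEq α] (p : Ω → ℝ) (X : Ω → α) (h : α → ℝ) :
    ∑ ω, p ω * h (X ω) = ∑ a ∈ Finset.univ.image X, probEq p X a * h a := by
  rw [← Finset.sum_fiberwise_of_maps_to fun ω _ => Finset.mem_image_of_mem X (Finset.mem_univ ω)]
  refine Finset.sum_congr rfl fun a _ => ?_
  rw [probEq, Finset.sum_mul, Finset.sum_filter]
  refine Finset.sum_congr rfl fun ω _ => ?_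
  by_cases ha : X ω = a <;> simp [ha]

end ProbEq

section Gibbs

variable {Ω α β : Type*} [Fintype Ω] {p : Ω → ℝ}

/-- Cross entropy (base 2) of the random variable `X` under `p` relative to the weights `q`.
Outcomes with `q (X ω) = 0` contribute `0` instead of `∞`, so lemmas ask that these be `p`-null. -/
def crossEntOf (p : Ω → ℝ) (q : α → ℝ) (X : Ω → α) : ℝ :=
  -∑ ω, p ω * Real.logb 2 (q (X ω))

theorem sum_mul_logb_nonpos {ρ : Ω → ℝ} (hp : ∀ ω, 0 ≤ p ω) (hρ : ∀ ω, p ω ≠ 0 → 0 < ρ ω)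
    (hsum : ∑ ω, p ω * ρ ω ≤ ∑ ω, p ω) : ∑ ω, p ω * Real.logb 2 (ρ ω) ≤ 0 := by
  have hlog : ∀ ω, p ω * Real.log (ρ ω) ≤ p ω * ρ ω - p ω := fun ω => by
    rcases eq_or_ne (p ω) 0 with h0 | h0
    · simp [h0]
    · nlinarith [Real.log_le_sub_one_of_pos (hρ ω h0), hp ω]
  have hsum_log : ∑ ω, p ω * Real.log (ρ ω) ≤ 0 := by
    refine (Finset.sum_le_sum fun ω _ => hlog ω).trans ?_
    rw [Finset.sum_sub_distrib]
    exact sub_nonpos.2 hsum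
  simp only [Real.logb, ← mul_div_assoc, ← Finset.sum_div]
  exact div_nonpos_of_nonpos_of_nonneg hsum_log (Real.log_nonneg one_le_two)

theorem sum_mul_logb_div {f g : Ω → ℝ} (hf : ∀ ω, p ω ≠ 0 → f ω ≠ 0)
    (hg : ∀ ω, p ω ≠ 0 → g ω ≠ 0) :
    ∑ ω, p ω * Real.logb 2 (f ω / g ω)
      = ∑ ω, p ω * Real.logb 2 (f ω) - ∑ ω, p ω * Real.logb 2 (g ω) := by
  rw [← Finset.sum_sub_distrib]
  refine Finset.sum_congr rfl fun ω _ => ?_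
  rcases eq_or_ne (p ω) 0 with h0 | h0
  · simp [h0]
  · rw [Real.logb_div (hf ω h0) (hg ω h0), mul_sub]

theorem sum_mul_likelihoodRatio_le [Fintype α] (hp : ∀ ω, 0 ≤ p ω) (X : Ω → α) (Y : Ω → β)
    {Q : α × β → ℝ} (hQ : ∀ c, 0 ≤ Q c) (hsum : ∀ b, ∑ a, Q (a, b) ≤ 1) :
    ∑ ω, p ω * (Q (X ω, Y ω) / (probEq p (fun ω => (X ω, Y ω)) (X ω, Y ω) / probEq p Y (Y ω)))
      ≤ ∑ ω, p ω := by
  classical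
  have hY : ∀ b, 0 ≤ probEq p Y b := probEq_nonneg hp Y
  have hcancel : ∀ c : α × β, probEq p (fun ω => (X ω, Y ω)) c
      * (Q c / (probEq p (fun ω => (X ω, Y ω)) c / probEq p Y c.2)) ≤ Q c * probEq p Y c.2 := by
    intro c
    rw [div_div_eq_mul_div]
    rcases eq_or_ne (probEq p (fun ω => (X ω, Y ω)) c) 0 with h0 | h0
    · simpa [h0] using mul_nonneg (hQ c) (hY c.2)
    · rw [mul_div_cancel₀ _ h0]
  have himage : Finset.univ.image (fun ω => (X ω, Y ω)) ⊆ Finset.univ ×ˢ Finset.univ.image Y := by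
    simp [Finset.subset_iff]
  calc _ ≤ ∑ c ∈ Finset.univ.image (fun ω => (X ω, Y ω)), Q c * probEq p Y c.2 := by
        rw [sum_mul_comp_eq_sum_image p (fun ω => (X ω, Y ω))
          fun c => Q c / (probEq p (fun ω => (X ω, Y ω)) c / probEq p Y c.2)]
        exact Finset.sum_le_sum fun c _ => hcancel c
    _ ≤ ∑ c ∈ Finset.univ ×ˢ Finset.univ.image Y, Q c * probEq p Y c.2 :=
        Finset.sum_le_sum_of_subset_of_nonneg himage fun c _ _ => mul_nonneg (hQ c) (hY c.2)
    _ = ∑ b ∈ Finset.univ.image Y, (∑ a, Q (a, b)) * probEq p Y b := by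
        simp only [Finset.sum_product_right, Finset.sum_mul]
    _ ≤ ∑ b ∈ Finset.univ.image Y, probEq p Y b * 1 := by
        refine Finset.sum_le_sum fun b _ => ?_
        rw [mul_comm]
        exact mul_le_mul_of_nonneg_left (hsum b) (hY b)
    _ = ∑ ω, p ω := by
        rw [← sum_mul_comp_eq_sum_image p Y fun _ => 1]
        simp

theorem condEntOf_le_crossEntOf [Fintype α] (hp : ∀ ω, 0 ≤ p ω) (X : Ω → α) (Y : Ω → β)
    {Q : α × β → ℝ} (hQ : ∀ c, 0 ≤ Q c) (hQp : ∀ ω, p ω ≠ 0 → Q (X ω, Y ω) ≠ 0)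
    (hsum : ∀ b, ∑ a, Q (a, b) ≤ 1) :
    condEntOf p X Y ≤ crossEntOf p Q fun ω => (X ω, Y ω) := by
  have hXY : ∀ ω, p ω ≠ 0 → 0 < probEq p (fun ω => (X ω, Y ω)) (X ω, Y ω) := fun ω hω =>
    probEq_apply_pos hp (fun ω => (X ω, Y ω)) hω
  have hY : ∀ ω, p ω ≠ 0 → 0 < probEq p Y (Y ω) := fun ω hω => probEq_apply_pos hp Y hω
  have hgibbs := sum_mul_logb_nonpos hp
    (fun ω hω => div_pos ((hQ _).lt_of_ne' (hQp ω hω)) (div_pos (hXY ω hω) (hY ω hω)))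
    (sum_mul_likelihoodRatio_le hp X Y hQ hsum)
  rw [sum_mul_logb_div hQp fun ω hω => (div_pos (hXY ω hω) (hY ω hω)).ne',
    sum_mul_logb_div (fun ω hω => (hXY ω hω).ne') fun ω hω => (hY ω hω).ne'] at hgibbs
  simp only [condEntOf, entOf, crossEntOf]
  linarith

end Gibbs

section Entropy

variable {Ω α β γ : Type*} [Fintype Ω] {p : Ω → ℝ}

theorem entOf_congr (p : Ω → ℝ) {X : Ω → α} {Y : Ω → β} (h : ∀ ω ω', X ω = X ω' ↔ Y ω = Y ω') :
    entOf p X = entOf p Y := by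
  simp only [entOf, probEq_apply_congr p h]

theorem condEntOf_congr_right (p : Ω → ℝ) (X : Ω → α) {Y : Ω → β} {Z : Ω → γ}
    (h : ∀ ω ω', Y ω = Y ω' ↔ Z ω = Z ω') : condEntOf p X Y = condEntOf p X Z := by
  rw [condEntOf, condEntOf, entOf_congr p h, entOf_congr p (Y := fun ω => (X ω, Z ω))]
  simp only [Prod.mk.injEq, h, implies_true]

theorem condEntOf_of_factorsThrough (p : Ω → ℝ) {X : Ω → α} {Y : Ω → β}
    (h : Y.FactorsThrough X) : condEntOf p X Y = entOf p X - entOf p Y := by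
  rw [condEntOf, entOf_congr p (Y := X)]
  intro ω ω'
  rw [Prod.mk.injEq]
  exact and_iff_left_of_imp fun hX => h hX

theorem condEntOf_const (hp : ∑ ω, p ω = 1) (X : Ω → α) (b : β) :
    condEntOf p X (fun _ => b) = entOf p X := by
  have hb : entOf p (fun _ : Ω => b) = 0 := by simp [entOf, probEq, hp]
  rw [condEntOf_of_factorsThrough p fun _ _ _ => rfl, hb, sub_zero]

theorem entOf_le_crossEntOf [Fintype α] (hp : IsPMF p) (X : Ω → α) {q : α → ℝ}
    (hq : ∀ a, 0 ≤ q a) (hqp : ∀ ω, p ω ≠ 0 → q (X ω) ≠ 0) (hsum : ∑ a, q a ≤ 1) :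
    entOf p X ≤ crossEntOf p q X := by
  rw [← condEntOf_const hp.2 X ()]
  exact condEntOf_le_crossEntOf hp.1 X (fun _ => ()) (Q := fun c => q c.1) (fun c => hq c.1) hqp
    fun _ => hsum

theorem sum_probEq_prodMk_div_le_one [Fintype α] (p : Ω → ℝ) (X : Ω → α) (Y : Ω → β) (b : β) :
    ∑ a, probEq p (fun ω => (X ω, Y ω)) (a, b) / probEq p Y b ≤ 1 := by
  rw [← Finset.sum_div, sum_probEq_prodMk]
  exact div_self_le_one _

theorem condEntOf_le_of_factorsThrough [Finite α] (hp : ∀ ω, 0 ≤ p ω) (X : Ω → α) {S : Ω → β}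
    {W : Ω → γ} (h : W.FactorsThrough S) : condEntOf p X S ≤ condEntOf p X W := by
  rcases isEmpty_or_nonempty Ω with hΩ | ⟨⟨ω₀⟩⟩
  · simp [condEntOf, entOf]
  have := Fintype.ofFinite α
  have : Nonempty γ := ⟨W ω₀⟩
  obtain ⟨e, rfl⟩ := (Function.factorsThrough_iff W).1 h
  have hXW : ∀ ω, p ω ≠ 0 → probEq p (fun ω => (X ω, e (S ω))) (X ω, e (S ω)) ≠ 0 := fun ω hω =>
    (probEq_apply_pos hp (fun ω => (X ω, e (S ω))) hω).ne'
  have hW : ∀ ω, p ω ≠ 0 → probEq p (fun ω => e (S ω)) (e (S ω)) ≠ 0 := fun ω hω =>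
    (probEq_apply_pos hp (fun ω => e (S ω)) hω).ne'
  refine (condEntOf_le_crossEntOf hp X S
    (Q := fun c => probEq p (fun ω => (X ω, e (S ω))) (c.1, e c.2)
      / probEq p (fun ω => e (S ω)) (e c.2))
    (fun c => div_nonneg (probEq_nonneg hp _ _) (probEq_nonneg hp _ _))
    (fun ω hω => div_ne_zero (hXW ω hω) (hW ω hω))
    fun b => sum_probEq_prodMk_div_le_one p X (fun ω => e (S ω)) (e b)).trans_eq ?_
  simp only [crossEntOf, condEntOf, entOf, sum_mul_logb_div hXW hW, Function.comp_def]
  ring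

theorem condMIOf_eq_condEntOf_sub (p : Ω → ℝ) (X : Ω → α) (U : Ω → β) (Z : Ω → γ) :
    condMIOf p X U Z = condEntOf p X Z - condEntOf p X fun ω => (U ω, Z ω) := by
  simp only [condMIOf, condEntOf]
  rw [entOf_congr p (X := fun ω => ((X ω, U ω), Z ω)) (Y := fun ω => (X ω, (U ω, Z ω)))]
  · ring
  · simp [and_assoc]

theorem condMIOf_comm (p : Ω → ℝ) (X : Ω → α) (U : Ω → β) (Z : Ω → γ) :
    condMIOf p X U Z = condMIOf p U X Z := by
  simp only [condMIOf, condEntOf]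
  rw [entOf_congr p (X := fun ω => ((X ω, U ω), Z ω)) (Y := fun ω => ((U ω, X ω), Z ω))]
  · ring
  · simp [and_comm]

theorem condMIOf_nonneg [Finite α] (hp : ∀ ω, 0 ≤ p ω) (X : Ω → α) (U : Ω → β) (Z : Ω → γ) :
    0 ≤ condMIOf p X U Z := by
  rw [condMIOf_eq_condEntOf_sub, sub_nonneg]
  exact condEntOf_le_of_factorsThrough hp X fun _ _ h => (Prod.mk.inj h).2

end Entropy

section SingleLetter

variable {Ω 𝒴 𝒳 𝒜 𝒵 𝒰 σ : Type*} {p : Ω → ℝ} {V : Ω → 𝒴}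

theorem probEq_comp_ne_zero [Fintype 𝒴] {P : 𝒴 → ℝ} (hP : ∀ y, 0 ≤ P y)
    (hV : ∀ ω, p ω ≠ 0 → P (V ω) ≠ 0) (f : 𝒴 → 𝒳) (ω : Ω) (hω : p ω ≠ 0) :
    probEq P f (f (V ω)) ≠ 0 :=
  (probEq_apply_pos hP f (hV ω hω)).ne'

variable [Fintype Ω]

theorem condEntOf_sub_le_condEntOf_comp [Finite 𝒴] (hp : ∀ ω, 0 ≤ p ω) (x : 𝒴 → 𝒳)
    {a : 𝒴 → 𝒜} {S : Ω → σ} (haS : (fun ω => a (V ω)).FactorsThrough S) :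
    condEntOf p V S - condEntOf p V (fun ω => (x (V ω), a (V ω)))
      ≤ condEntOf p (fun ω => x (V ω)) S := by
  have hmono : condEntOf p V (fun ω => (x (V ω), S ω))
      ≤ condEntOf p V fun ω => (x (V ω), a (V ω)) :=
    condEntOf_le_of_factorsThrough hp V fun ω ω' h => by
      obtain ⟨hx, hS⟩ := Prod.mk.inj h
      exact Prod.ext hx (haS hS)
  have hchain : condEntOf p V S
      = condEntOf p V (fun ω => (x (V ω), S ω)) + condEntOf p (fun ω => x (V ω)) S := by
    simp only [condEntOf]
    rw [entOf_congr p (X := fun ω => (V ω, (x (V ω), S ω))) (Y := fun ω => (V ω, S ω))]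
    · ring
    · intro ω ω'
      simp only [Prod.mk.injEq]
      exact ⟨fun h => ⟨h.1, h.2.2⟩, fun h => ⟨h.1, congrArg x h.1, h.2⟩⟩
  linarith

variable [Fintype 𝒴] {P : 𝒴 → ℝ}

/-- The conditional law of `x` given `a` is its conditional law given `z`. For `z` a function of
`a` this is the Markov chain `x → z → a`. It is stated without division, so that it says nothing
about null events. -/
def CondLawEq (P : 𝒴 → ℝ) (x : 𝒴 → 𝒳) (a : 𝒴 → 𝒜) (z : 𝒴 → 𝒵) : Prop :=
  ∀ y, probEq P (fun y => (x y, a y)) (x y, a y) * probEq P z (z y)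
    = probEq P (fun y => (x y, z y)) (x y, z y) * probEq P a (a y)

theorem condEntOf_comp_le [Finite 𝒳] (hp : ∀ ω, 0 ≤ p ω) (hP : ∀ y, 0 ≤ P y)
    (hV : ∀ ω, p ω ≠ 0 → P (V ω) ≠ 0) (x : 𝒴 → 𝒳) (z : 𝒴 → 𝒵) :
    condEntOf p (fun ω => x (V ω)) (fun ω => z (V ω))
      ≤ crossEntOf p (probEq P fun y => (x y, z y)) (fun ω => (x (V ω), z (V ω)))
        - crossEntOf p (probEq P z) fun ω => z (V ω) := by
  have := Fintype.ofFinite 𝒳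
  have hxz := probEq_comp_ne_zero hP hV fun y => (x y, z y)
  have hz := probEq_comp_ne_zero hP hV z
  refine (condEntOf_le_crossEntOf hp (fun ω => x (V ω)) (fun ω => z (V ω))
    (Q := fun c => probEq P (fun y => (x y, z y)) c / probEq P z c.2)
    (fun c => div_nonneg (probEq_nonneg hP _ _) (probEq_nonneg hP _ _))
    (fun ω hω => div_ne_zero (hxz ω hω) (hz ω hω))
    (sum_probEq_prodMk_div_le_one P x z)).trans_eq ?_
  simp only [crossEntOf, sum_mul_logb_div hxz hz]
  ring

theorem CondLawEq.crossEntOf_sub_eq {x : 𝒴 → 𝒳} {a : 𝒴 → 𝒜} {z : 𝒴 → 𝒵}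
    (h : CondLawEq P x a z) (hP : ∀ y, 0 ≤ P y) (hV : ∀ ω, p ω ≠ 0 → P (V ω) ≠ 0) :
    crossEntOf p (probEq P fun y => (x y, a y)) (fun ω => (x (V ω), a (V ω)))
        - crossEntOf p (probEq P a) (fun ω => a (V ω))
      = crossEntOf p (probEq P fun y => (x y, z y)) (fun ω => (x (V ω), z (V ω)))
        - crossEntOf p (probEq P z) fun ω => z (V ω) := by
  have ha := probEq_comp_ne_zero hP hV a
  have hz := probEq_comp_ne_zero hP hV z
  have hratio : ∑ ω, p ω * Real.logb 2 (probEq P (fun y => (x y, a y)) (x (V ω), a (V ω))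
        / probEq P a (a (V ω)))
      = ∑ ω, p ω * Real.logb 2 (probEq P (fun y => (x y, z y)) (x (V ω), z (V ω))
        / probEq P z (z (V ω))) := by
    refine Finset.sum_congr rfl fun ω _ => ?_
    rcases eq_or_ne (p ω) 0 with h0 | h0
    · simp [h0]
    · rw [(div_eq_div_iff (ha ω h0) (hz ω h0)).2 (h (V ω))]
  rw [sum_mul_logb_div (probEq_comp_ne_zero hP hV fun y => (x y, a y)) ha,
    sum_mul_logb_div (probEq_comp_ne_zero hP hV fun y => (x y, z y)) hz] at hratio
  simp only [crossEntOf]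
  linarith

theorem CondLawEq.condMIOf_le [Finite 𝒳] {x : 𝒴 → 𝒳} {a : 𝒴 → 𝒜} {z : 𝒴 → 𝒵} {U : Ω → 𝒰}
    {S : Ω → σ} (h : CondLawEq P x a z) (hp : ∀ ω, 0 ≤ p ω) (hP : ∀ y, 0 ≤ P y)
    (hV : ∀ ω, p ω ≠ 0 → P (V ω) ≠ 0) (hza : z.FactorsThrough a)
    (haS : (fun ω => a (V ω)).FactorsThrough S) (hUS : U.FactorsThrough S) :
    condMIOf p (fun ω => x (V ω)) U (fun ω => z (V ω))
      ≤ crossEntOf p P V - crossEntOf p (probEq P a) (fun ω => a (V ω)) - condEntOf p V S := by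
  have hUZ : condEntOf p (fun ω => x (V ω)) S
      ≤ condEntOf p (fun ω => x (V ω)) fun ω => (U ω, z (V ω)) :=
    condEntOf_le_of_factorsThrough hp _ fun ω ω' hS => Prod.ext (hUS hS) (hza (haS hS))
  have hVS := condEntOf_sub_le_condEntOf_comp hp x haS
  have hxz := condEntOf_comp_le hp hP hV x z
  have hVxa : condEntOf p V (fun ω => (x (V ω), a (V ω))) ≤ crossEntOf p P V
      - crossEntOf p (probEq P fun y => (x y, a y)) fun ω => (x (V ω), a (V ω)) := by
    refine (condEntOf_comp_le hp hP hV id fun y => (x y, a y)).trans_eq ?_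
    simp only [crossEntOf, id_eq]
    simp only [probEq_apply_of_injective P
      (X := fun y => (y, (x y, a y))) fun _ _ hy => (Prod.mk.inj hy).1]
  have hmarkov := h.crossEntOf_sub_eq hP hV
  rw [condMIOf_eq_condEntOf_sub]
  linarith

end SingleLetter

section UniformTime

variable {Ω α β : Type*} {n : ℕ} {r : Ω → ℝ}

/-- The law of `(ω, T)` for `ω` drawn from `r` and an independent `T` uniform on `Fin n`. -/
def withUniformTime (n : ℕ) (r : Ω → ℝ) (ω : Ω × Fin n) : ℝ := r ω.1 / n

theorem withUniformTime_nonneg (hr : ∀ ω, 0 ≤ r ω) (ω : Ω × Fin n) : 0 ≤ withUniformTime n r ω :=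
  div_nonneg (hr ω.1) n.cast_nonneg

variable [Fintype Ω]

theorem crossEntOf_withUniformTime (r : Ω → ℝ) (q : α → ℝ) (X : Ω × Fin n → α) :
    crossEntOf (withUniformTime n r) q X
      = (∑ t, crossEntOf r q fun ω => X (ω, t)) / n := by
  simp only [crossEntOf, withUniformTime]
  rw [Fintype.sum_prod_type_right, Finset.sum_neg_distrib, neg_div, Finset.sum_div]
  simp only [Finset.sum_div, div_mul_eq_mul_div]

theorem probEq_withUniformTime (r : Ω → ℝ) {F : Ω × Fin n → β}
    (hF : Function.FactorsThrough Prod.snd F) (ω : Ω) (t : Fin n) :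
    probEq (withUniformTime n r) F (F (ω, t)) = probEq r (fun ω => F (ω, t)) (F (ω, t)) / n := by
  classical
  have hne : ∀ ω' t', t' ≠ t → F (ω', t') ≠ F (ω, t) := fun ω' t' ht h => ht (hF h)
  simp only [probEq, withUniformTime, Fintype.sum_prod_type_right]
  rw [Finset.sum_eq_single t (fun t' _ ht => by simp [hne _ t' ht]) (by simp), Finset.sum_div]
  simp only [ite_div, zero_div]

theorem entOf_withUniformTime (hn : n ≠ 0) (hr : IsPMF r) {F : Ω × Fin n → β}
    (hF : Function.FactorsThrough Prod.snd F) :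
    entOf (withUniformTime n r) F
      = Real.logb 2 n + (∑ t, entOf r fun ω => F (ω, t)) / n := by
  have hn' : (n : ℝ) ≠ 0 := Nat.cast_ne_zero.2 hn
  have hslice : ∀ t, ∑ ω, r ω * Real.logb 2 (probEq (withUniformTime n r) F (F (ω, t)))
      = -entOf r (fun ω => F (ω, t)) - Real.logb 2 n := by
    intro t
    simp only [probEq_withUniformTime r hF]
    rw [sum_mul_logb_div (fun ω hω => (probEq_apply_pos hr.1 (fun ω => F (ω, t)) hω).ne')
      fun _ _ => hn', ← Finset.sum_mul, hr.2, one_mul, entOf, neg_neg]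
  change crossEntOf (withUniformTime n r) (probEq (withUniformTime n r) F) F = _
  rw [crossEntOf_withUniformTime]
  simp only [crossEntOf, hslice, neg_sub, sub_neg_eq_add]
  rw [Finset.sum_add_distrib, add_div, Finset.sum_const, Finset.card_univ, Fintype.card_fin,
    nsmul_eq_mul, mul_div_cancel_left₀ _ hn']

theorem condEntOf_withUniformTime (hn : n ≠ 0) (hr : IsPMF r) (X : Ω × Fin n → α)
    {S : Ω × Fin n → β} (hS : Function.FactorsThrough Prod.snd S) :
    condEntOf (withUniformTime n r) X S
      = (∑ t, condEntOf r (fun ω => X (ω, t)) fun ω => S (ω, t)) / n := by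
  simp only [condEntOf]
  rw [entOf_withUniformTime hn hr hS,
    entOf_withUniformTime hn hr fun ω ω' h => hS (Prod.mk.inj h).2, Finset.sum_sub_distrib]
  ring

end UniformTime

section MultiLetter

variable {Ω 𝒴 𝒜 𝒳 𝒵 𝒰 : Type*} [Fintype Ω] {n : ℕ} {r : Ω → ℝ}

/-- The side information `a(w)` at all times together with the letters of `w` before time `m`.
Later letters are masked by `none`. -/
def history (a : 𝒴 → 𝒜) (m : ℕ) (w : Fin n → 𝒴) : (Fin n → 𝒜) × (Fin n → Option 𝒴) :=
  (fun t => a (w t), fun t => if (t : ℕ) < m then some (w t) else none)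

theorem history_eq_iff {a : 𝒴 → 𝒜} {m : ℕ} {w w' : Fin n → 𝒴} :
    history a m w = history a m w' ↔
      (∀ t, a (w t) = a (w' t)) ∧ ∀ t : Fin n, (t : ℕ) < m → w t = w' t := by
  rw [history, history, Prod.mk.injEq, funext_iff, funext_iff]
  refine and_congr_right' (forall_congr' fun t => ?_)
  by_cases h : (t : ℕ) < m <;> simp [h]

theorem letter_history_eq_iff {a : 𝒴 → 𝒜} {t : Fin n} {w w' : Fin n → 𝒴} :
    (w t, history a t w) = (w' t, history a t w')
      ↔ history a (t + 1) w = history a (t + 1) w' := by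
  simp only [Prod.mk.injEq, history_eq_iff, Nat.lt_succ_iff_lt_or_eq, or_imp, forall_and,
    ← Fin.ext_iff, forall_eq]
  tauto

theorem sum_condEntOf_history (r : Ω → ℝ) (a : 𝒴 → 𝒜) (w : Ω → Fin n → 𝒴) :
    ∑ t : Fin n, condEntOf r (fun ω => w ω t) (fun ω => history a t (w ω))
      = entOf r w - entOf r fun ω t => a (w ω t) := by
  have hstep : ∀ t : Fin n, condEntOf r (fun ω => w ω t) (fun ω => history a t (w ω))
      = entOf r (fun ω => history a (t + 1) (w ω)) - entOf r fun ω => history a t (w ω) := fun t =>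
    congrArg (· - _) (entOf_congr r fun _ _ => letter_history_eq_iff)
  have hlast : entOf r (fun ω => history a n (w ω)) = entOf r w :=
    entOf_congr r fun ω ω' => by
      rw [history_eq_iff]
      exact ⟨fun h => funext fun t => h.2 t t.isLt, fun h => by simp [h]⟩
  have hfirst : entOf r (fun ω => history a 0 (w ω)) = entOf r fun ω t => a (w ω t) :=
    entOf_congr r fun ω ω' => by simp [history_eq_iff, funext_iff]
  simp only [hstep]
  rw [Fin.sum_univ_eq_sum_range
    (fun m => entOf r (fun ω => history a (m + 1) (w ω)) - entOf r fun ω => history a m (w ω)) n,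
    Finset.sum_range_sub fun m => entOf r fun ω => history a m (w ω), hlast, hfirst]

theorem condEntOf_letter_history (hn : n ≠ 0) (hr : IsPMF r) (a : 𝒴 → 𝒜) (w : Ω → Fin n → 𝒴) :
    condEntOf (withUniformTime n r) (fun ω => w ω.1 ω.2)
        (fun ω => (history a ω.2 (w ω.1), ω.2))
      = (entOf r w - entOf r fun ω t => a (w ω t)) / n := by
  rw [condEntOf_withUniformTime hn hr _ fun _ _ h => (Prod.mk.inj h).2,
    ← sum_condEntOf_history r a w]
  congr 1
  refine Finset.sum_congr rfl fun t _ => condEntOf_congr_right r _ fun ω ω' => ?_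
  simp

theorem crossEntOf_prod {q : 𝒴 → ℝ} {w : Ω → Fin n → 𝒴}
    (hq : ∀ ω, r ω ≠ 0 → ∀ t, q (w ω t) ≠ 0) :
    crossEntOf r (fun v => ∏ t, q (v t)) w = ∑ t, crossEntOf r q fun ω => w ω t := by
  simp only [crossEntOf]
  rw [Finset.sum_neg_distrib, Finset.sum_comm]
  congr 1
  refine Finset.sum_congr rfl fun ω _ => ?_
  rw [← Finset.mul_sum]
  rcases eq_or_ne (r ω) 0 with h0 | h0
  · simp [h0]
  · rw [Real.logb_prod _ _ fun t _ => hq ω h0 t]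

theorem crossEntOf_add_logb_le_entOf {α : Type*} {X : Ω → α} {q : α → ℝ} {Δ : ℝ} (hr : IsPMF r)
    (hΔ : 0 < Δ) (hdom : ∀ x, Δ * probEq r X x ≤ q x) :
    crossEntOf r q X + Real.logb 2 Δ ≤ entOf r X := by
  have hlog : ∀ ω, r ω * Real.logb 2 Δ + r ω * Real.logb 2 (probEq r X (X ω))
      ≤ r ω * Real.logb 2 (q (X ω)) := by
    intro ω
    rcases eq_or_ne (r ω) 0 with h0 | h0
    · simp [h0]
    have hX := probEq_apply_pos hr.1 X h0
    rw [← mul_add, ← Real.logb_mul hΔ.ne' hX.ne']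
    exact mul_le_mul_of_nonneg_left
      (Real.logb_le_logb_of_le one_lt_two (mul_pos hΔ hX) (hdom (X ω))) (hr.1 ω)
  have hsum := Finset.sum_le_sum fun ω (_ : ω ∈ Finset.univ) => hlog ω
  rw [Finset.sum_add_distrib, ← Finset.sum_mul, hr.2, one_mul] at hsum
  simp only [crossEntOf, entOf]
  linarith

variable {P : 𝒴 → ℝ} {w : Ω → Fin n → 𝒴} {Δ : ℝ}

theorem apply_ne_zero_of_probEq_le_prod (hr : ∀ ω, 0 ≤ r ω) (hΔ : 0 < Δ)
    (hdom : ∀ v, Δ * probEq r w v ≤ ∏ t, P (v t)) {ω : Ω} (hω : r ω ≠ 0) (t : Fin n) :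
    P (w ω t) ≠ 0 :=
  Finset.prod_ne_zero_iff.1
    ((mul_pos hΔ (probEq_apply_pos hr w hω)).trans_le (hdom (w ω))).ne' t (Finset.mem_univ t)

variable [Fintype 𝒴]

theorem entOf_comp_le_crossEntOf_prod [Finite 𝒜] (hP : IsPMF P) (hr : IsPMF r) (a : 𝒴 → 𝒜)
    (hw : ∀ ω, r ω ≠ 0 → ∀ t, P (w ω t) ≠ 0) :
    entOf r (fun ω t => a (w ω t))
      ≤ crossEntOf r (fun v => ∏ t, probEq P a (v t)) fun ω t => a (w ω t) := by
  have := Fintype.ofFinite 𝒜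
  refine entOf_le_crossEntOf hr _ (fun v => Finset.prod_nonneg fun t _ => probEq_nonneg hP.1 a _)
    (fun ω hω => Finset.prod_ne_zero_iff.2 fun t _ => (probEq_apply_pos hP.1 a (hw ω hω t)).ne') ?_
  rw [← Fintype.piFinset_univ, ← Finset.prod_univ_sum, sum_probEq, hP.2, Finset.prod_const_one]

theorem crossEntOf_sub_add_logb_div_le_condEntOf [Finite 𝒜] (hn : n ≠ 0) (hP : IsPMF P)
    (hr : IsPMF r) (hΔ : 0 < Δ) (hdom : ∀ v, Δ * probEq r w v ≤ ∏ t, P (v t)) (a : 𝒴 → 𝒜) :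
    crossEntOf (withUniformTime n r) P (fun ω => w ω.1 ω.2)
        - crossEntOf (withUniformTime n r) (probEq P a) (fun ω => a (w ω.1 ω.2))
        + Real.logb 2 Δ / n
      ≤ condEntOf (withUniformTime n r) (fun ω => w ω.1 ω.2)
        fun ω => (history a ω.2 (w ω.1), ω.2) := by
  have hw : ∀ ω, r ω ≠ 0 → ∀ t, P (w ω t) ≠ 0 := fun ω hω =>
    apply_ne_zero_of_probEq_le_prod hr.1 hΔ hdom hω
  have hwa : ∀ ω, r ω ≠ 0 → ∀ t, probEq P a (a (w ω t)) ≠ 0 := fun ω hω t =>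
    (probEq_apply_pos hP.1 a (hw ω hω t)).ne'
  have hlower := crossEntOf_add_logb_le_entOf hr hΔ hdom
  have hupper := entOf_comp_le_crossEntOf_prod hP hr a hw
  rw [crossEntOf_prod hw] at hlower
  rw [crossEntOf_prod (w := fun ω t => a (w ω t)) hwa] at hupper
  rw [condEntOf_letter_history hn hr, crossEntOf_withUniformTime, crossEntOf_withUniformTime,
    ← sub_div, ← add_div]
  gcongr
  linarith

theorem CondLawEq.condMIOf_withUniformTime_le [Finite 𝒜] [Finite 𝒳] {x : 𝒴 → 𝒳} {a : 𝒴 → 𝒜}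
    {z : 𝒴 → 𝒵} {U : Ω × Fin n → 𝒰} (h : CondLawEq P x a z) (hn : n ≠ 0) (hP : IsPMF P)
    (hr : IsPMF r) (hΔ : 0 < Δ) (hdom : ∀ v, Δ * probEq r w v ≤ ∏ t, P (v t))
    (hza : z.FactorsThrough a)
    (hU : U.FactorsThrough fun ω => (history a ω.2 (w ω.1), ω.2)) :
    condMIOf (withUniformTime n r) (fun ω => x (w ω.1 ω.2)) U (fun ω => z (w ω.1 ω.2))
      ≤ -(Real.logb 2 Δ / n) := by
  have hV : ∀ ω, withUniformTime n r ω ≠ 0 → P (w ω.1 ω.2) ≠ 0 := fun ω hω =>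
    apply_ne_zero_of_probEq_le_prod hr.1 hΔ hdom (div_ne_zero_iff.1 hω).1 ω.2
  have ha : Function.FactorsThrough (fun ω : Ω × Fin n => a (w ω.1 ω.2))
      fun ω => (history a ω.2 (w ω.1), ω.2) := by
    rintro ⟨ω, t⟩ ⟨ω', t'⟩ hS
    obtain ⟨hhist, rfl : t = t'⟩ := Prod.mk.inj hS
    exact (history_eq_iff.1 hhist).1 t
  have hsingle := h.condMIOf_le (withUniformTime_nonneg hr.1) hP.1 hV hza ha hU
  have hmulti := crossEntOf_sub_add_logb_div_le_condEntOf hn hP hr hΔ hdom a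
  linarith

end MultiLetter

section Conditioning

variable {Ω α : Type*} [Fintype Ω] {p : Ω → ℝ} {D : Set Ω}

open Classical in
/-- The law `p` conditioned on the event `D`. It vanishes identically when `D` is null. -/
def conditionOn (p : Ω → ℝ) (D : Set Ω) (ω : Ω) : ℝ :=
  if ω ∈ D then p ω / probSet p D else 0

theorem probSet_nonneg (hp : ∀ ω, 0 ≤ p ω) (D : Set Ω) : 0 ≤ probSet p D := by
  classical
  exact Finset.sum_nonneg fun ω _ => ite_nonneg (hp ω) le_rfl

theorem probSet_le_one (hp : IsPMF p) (D : Set Ω) : probSet p D ≤ 1 := by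
  classical
  rw [← hp.2]
  exact Finset.sum_le_sum fun ω _ => by split_ifs <;> simp [hp.1 ω]

theorem isPMF_conditionOn (hp : ∀ ω, 0 ≤ p ω) (hD : 0 < probSet p D) :
    IsPMF (conditionOn p D) := by
  classical
  refine ⟨fun ω => ite_nonneg (div_nonneg (hp ω) hD.le) le_rfl, ?_⟩
  calc ∑ ω, conditionOn p D ω = (∑ ω, if ω ∈ D then p ω else 0) / probSet p D := by
        simp only [conditionOn, Finset.sum_div, ite_div, zero_div]
    _ = 1 := div_self hD.ne'

theorem probSet_mul_probEq_conditionOn_le (hp : ∀ ω, 0 ≤ p ω) (hD : 0 < probSet p D) (X : Ω → α)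
    (x : α) : probSet p D * probEq (conditionOn p D) X x ≤ probEq p X x := by
  classical
  rw [probEq, probEq, Finset.mul_sum]
  refine Finset.sum_le_sum fun ω _ => ?_
  by_cases hX : X ω = x <;> by_cases hω : ω ∈ D <;>
    simp [conditionOn, hX, hω, hp ω, mul_div_cancel₀ _ hD.ne']

end Conditioning

section MarkovField

variable {ι 𝒳 𝒜 𝒵 : Type*} {Y : ι → Type*} {P F G : (∀ i, Y i) → ℝ} {s t : Set ι}

theorem piecewise_piecewise_swap [∀ i, Decidable (i ∈ s)] (u v : ∀ i, Y i) :
    s.piecewise (s.piecewise u v) (s.piecewise v u) = u := by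
  ext i
  by_cases hi : i ∈ s <;> simp [hi]

theorem mul_piecewise_swap [∀ i, Decidable (i ∈ s)] (hF : DependsOn F s) (hG : DependsOn G t)
    (hFG : ∀ y, P y = F y * G y) {u v : ∀ i, Y i} (huv : ∀ i ∈ s ∩ t, u i = v i) :
    P (s.piecewise u v) * P (s.piecewise v u) = P u * P v := by
  have hF' : ∀ u v, F (s.piecewise u v) = F u := fun u v =>
    hF fun i hi => Set.piecewise_eq_of_mem s u v hi
  have hG' : ∀ u v, (∀ i ∈ s ∩ t, u i = v i) → G (s.piecewise u v) = G v := by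
    refine fun u v huv => hG fun i hi => ?_
    by_cases his : i ∈ s
    · rw [Set.piecewise_eq_of_mem s u v his, huv i ⟨his, hi⟩]
    · exact Set.piecewise_eq_of_notMem s u v his
  rw [hFG, hFG, hFG u, hFG v, hF', hF', hG' u v huv, hG' v u fun i hi => (huv i hi).symm]
  ring

theorem condLawEq_of_eq_mul [Fintype (∀ i, Y i)] (hF : DependsOn F s) (hG : DependsOn G t)
    (hFG : ∀ y, P y = F y * G y) {x : (∀ i, Y i) → 𝒳} {a : (∀ i, Y i) → 𝒜} {z : (∀ i, Y i) → 𝒵}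
    (hx : DependsOn x sᶜ) (ha : ∀ u v, a u = a v ↔ ∀ i ∈ s, u i = v i)
    (hz : ∀ u v, z u = z v ↔ ∀ i ∈ s ∩ t, u i = v i) : CondLawEq P x a z := by
  classical
  intro y
  have hx' : ∀ u v, x (s.piecewise u v) = x v := fun u v =>
    hx fun i hi => Set.piecewise_eq_of_notMem s u v hi
  have ha' : ∀ u v, a (s.piecewise u v) = a u := fun u v =>
    (ha _ _).2 fun i hi => Set.piecewise_eq_of_mem s u v hi
  have hz' : ∀ u v, z (s.piecewise u v) = z u := fun u v =>
    (hz _ _).2 fun i hi => Set.piecewise_eq_of_mem s u v hi.1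
  -- Exchanging the coordinates outside `s` is an involution of the pairs `(u, v)` that matches
  -- the two double sums term by term.
  rw [mul_comm (probEq P (fun y => (x y, z y)) _)]
  simp only [probEq]
  rw [Finset.sum_mul_sum, Finset.sum_mul_sum, ← Finset.sum_product', ← Finset.sum_product']
  refine Finset.sum_nbij' (fun q => (s.piecewise q.1 q.2, s.piecewise q.2 q.1))
    (fun q => (s.piecewise q.1 q.2, s.piecewise q.2 q.1)) (by simp) (by simp)
    (fun _ _ => Prod.ext (piecewise_piecewise_swap _ _) (piecewise_piecewise_swap _ _))
    (fun _ _ => Prod.ext (piecewise_piecewise_swap _ _) (piecewise_piecewise_swap _ _)) ?_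
  rintro ⟨u, v⟩ -
  simp only [hx', ha', hz', Prod.mk.injEq]
  by_cases hua : a u = a y
  · by_cases hvz : z v = z y
    · have huv : ∀ i ∈ s ∩ t, u i = v i := fun i hi =>
        ((ha u y).1 hua i hi.1).trans ((hz v y).1 hvz i hi).symm
      by_cases hux : x u = x y <;>
        simp [hua, hvz, hux, mul_piecewise_swap hF hG hFG huv]
    · simp [hvz]
  · simp [hua]

end MarkovField

section KHopMarkov

variable {k : ℕ} {Y : ℕ → Type} [∀ i, Fintype (Y i)] {P : (∀ i : Fin (k + 1), Y i) → ℝ}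

theorem IsMarkovChainK.eq_prod_div_prod (hMC : IsMarkovChainK k Y P) (hP : ∀ y, 0 ≤ P y)
    (y : ∀ i : Fin (k + 1), Y i) :
    P y = (∏ l : Fin k, pairMargK k Y P l (y (idxLo k l)) (y (idxHi k l)))
      / ∏ i ∈ {i : Fin (k + 1) | 0 < (i : ℕ) ∧ (i : ℕ) < k}, margK k Y P i (y i) := by
  by_cases h : ∏ i ∈ {i : Fin (k + 1) | 0 < (i : ℕ) ∧ (i : ℕ) < k}, margK k Y P i (y i) = 0
  · obtain ⟨i, -, hi⟩ := Finset.prod_eq_zero_iff.1 h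
    have hle : P y ≤ margK k Y P i (y i) := le_probEq_apply hP (fun y => y i) y
    rw [h, div_zero]
    exact le_antisymm (hle.trans_eq hi) (hP y)
  · rw [eq_div_iff h]
    convert hMC y

theorem IsMarkovChainK.exists_eq_mul (hMC : IsMarkovChainK k Y P) (hP : ∀ y, 0 ≤ P y)
    (j : Fin k) :
    ∃ F G : (∀ i : Fin (k + 1), Y i) → ℝ, DependsOn F {i | (i : ℕ) ≤ j} ∧
      DependsOn G {i | (j : ℕ) ≤ i} ∧ ∀ y, P y = F y * G y := by
  refine ⟨fun y => (∏ l : Fin k with l < j, pairMargK k Y P l (y (idxLo k l)) (y (idxHi k l)))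
      / ∏ i ∈ {i : Fin (k + 1) | (0 < (i : ℕ) ∧ (i : ℕ) < k) ∧ (i : ℕ) ≤ j}, margK k Y P i (y i),
    fun y => (∏ l : Fin k with ¬ l < j, pairMargK k Y P l (y (idxLo k l)) (y (idxHi k l)))
      / ∏ i ∈ {i : Fin (k + 1) | (0 < (i : ℕ) ∧ (i : ℕ) < k) ∧ ¬ (i : ℕ) ≤ j}, margK k Y P i (y i),
    fun y y' h => ?_, fun y y' h => ?_, fun y => ?_⟩
  · refine congrArg₂ (· / ·) (Finset.prod_congr rfl fun l hl => ?_)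
      (Finset.prod_congr rfl fun i hi => ?_)
    · have hlj : l < j := (Finset.mem_filter.1 hl).2
      rw [h (idxLo k l) (Fin.le_def.1 hlj.le), h (idxHi k l) (Fin.lt_def.1 hlj)]
    · rw [h i (Finset.mem_filter.1 hi).2.2]
  · refine congrArg₂ (· / ·) (Finset.prod_congr rfl fun l hl => ?_)
      (Finset.prod_congr rfl fun i hi => ?_)
    · have hjl : j ≤ l := not_lt.1 (Finset.mem_filter.1 hl).2
      rw [h (idxLo k l) (Fin.le_def.1 hjl), h (idxHi k l) (Nat.le_succ_of_le (Fin.le_def.1 hjl))]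
    · rw [h i (not_le.1 (Finset.mem_filter.1 hi).2.2).le]
  · rw [hMC.eq_prod_div_prod hP, div_mul_div_comm, Finset.prod_filter_mul_prod_filter_not]
    simp only [← Finset.filter_filter, Finset.prod_filter_mul_prod_filter_not]

theorem IsMarkovChainK.condLawEq (hMC : IsMarkovChainK k Y P) (hP : ∀ y, 0 ≤ P y) (j : Fin k) :
    CondLawEq P (fun y => y (idxHi k j)) (fun y (i : {i : Fin (k + 1) // (i : ℕ) ≤ j}) => y i.1)
      fun y => y (idxLo k j) := by
  obtain ⟨F, G, hF, hG, hFG⟩ := hMC.exists_eq_mul hP j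
  refine condLawEq_of_eq_mul hF hG hFG (fun u v h => h _ (Nat.not_succ_le_self j))
    (fun u v => by simp [funext_iff]) fun u v => ⟨fun h i hi => ?_, fun h => h _ ⟨?_, ?_⟩⟩
  · obtain rfl : i = idxLo k j := Fin.ext (le_antisymm hi.1 hi.2)
    exact h
  all_goals exact le_refl (j : ℕ)

end KHopMarkov

section KHop

variable {k : ℕ} {Y : ℕ → Type} {n : ℕ}

theorem msgRec_congr (φ : ∀ ℓ : ℕ, (Fin n → Y ℓ) → ℕ → ℕ) {ys ys' : ∀ ℓ : ℕ, Fin n → Y ℓ} {m : ℕ}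
    (h : ∀ ℓ ≤ m, ys ℓ = ys' ℓ) : msgRec Y n φ ys m = msgRec Y n φ ys' m := by
  induction m with
  | zero => rw [msgRec, msgRec, h 0 le_rfl]
  | succ m ih => rw [msgRec, msgRec, h (m + 1) le_rfl, ih fun ℓ hℓ => h ℓ (Nat.le_succ_of_le hℓ)]

theorem UvarCM_factorsThrough_history [∀ i, Nonempty (Y i)]
    (φ : ∀ ℓ : ℕ, (Fin n → Y ℓ) → ℕ → ℕ) (j : Fin k) :
    (UvarCM k Y n φ j).FactorsThrough fun ω =>
      (history (fun y (i : {i : Fin (k + 1) // (i : ℕ) ≤ j}) => y i.1) ω.2 (tupleSeq k Y ω.1),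
        ω.2) := by
  rintro ⟨ys, T⟩ ⟨ys', T'⟩ hS
  obtain ⟨hhist, rfl : T = T'⟩ := Prod.mk.inj hS
  obtain ⟨hlow, hpast⟩ := history_eq_iff.1 hhist
  refine Prod.ext (msgRec_congr φ fun ℓ hℓ => ?_) (Prod.ext ?_ rfl)
  · have hℓk : ℓ < k + 1 := (hℓ.trans_lt j.isLt).trans k.lt_succ_self
    rw [extendTup, extendTup, dif_pos hℓk, dif_pos hℓk]
    exact funext fun t => congrFun (hlow t) ⟨⟨ℓ, hℓk⟩, hℓ⟩
  · funext i t
    by_cases ht : (t : ℕ) < T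
    · simpa [UvarCM, prefixAll, tupleSeq, ht] using congrFun (hpast t ht) i
    · simp [UvarCM, prefixAll, ht]

variable [∀ i, Fintype (Y i)] {P : (∀ i : Fin (k + 1), Y i) → ℝ}

theorem isPMF_iidK (hP : IsPMF P) (n : ℕ) : IsPMF (iidK k Y P n) := by
  refine ⟨fun ys => Finset.prod_nonneg fun t _ => hP.1 _, ?_⟩
  calc ∑ ys, iidK k Y P n ys = ∑ v : Fin n → ∀ i : Fin (k + 1), Y i, ∏ t, P (v t) :=
        Fintype.sum_equiv (Equiv.piComm fun (i : Fin (k + 1)) (_ : Fin n) => Y i) _ _ fun _ => rfl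
    _ = 1 := by
        rw [← Fintype.piFinset_univ, ← Finset.prod_univ_sum, hP.2, Finset.prod_const_one]

theorem probEq_tupleSeq_iidK (P : (∀ i : Fin (k + 1), Y i) → ℝ)
    (v : Fin n → ∀ i : Fin (k + 1), Y i) :
    probEq (iidK k Y P n) (tupleSeq k Y) v = ∏ t, P (v t) :=
  probEq_apply_of_injective (iidK k Y P n) (X := tupleSeq k Y)
    (fun _ _ h => funext fun i => funext fun t => congrFun (congrFun h t) i) fun i t => v t i

variable [∀ i, Nonempty (Y i)]

theorem CondLawEq.tendsto_condMIOf_UvarCM {𝒳 𝒵 : Type*} [Finite 𝒳] {j : Fin k}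
    {x : (∀ i : Fin (k + 1), Y i) → 𝒳} {z : (∀ i : Fin (k + 1), Y i) → 𝒵}
    (h : CondLawEq P x (fun y (i : {i : Fin (k + 1) // (i : ℕ) ≤ j}) => y i.1) z)
    (hz : z.FactorsThrough fun y (i : {i : Fin (k + 1) // (i : ℕ) ≤ j}) => y i.1) (hP : IsPMF P)
    (φ : ∀ n ℓ : ℕ, (Fin n → Y ℓ) → ℕ → ℕ) {D : ∀ n, Set (∀ i : Fin (k + 1), Fin n → Y i)}
    (hpos : ∀ᶠ n in atTop, 0 < probSet (iidK k Y P n) (D n))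
    (hexp : Tendsto (fun n => Real.logb 2 (probSet (iidK k Y P n) (D n)) / n) atTop (nhds 0)) :
    Tendsto (fun n => condMIOf (withUniformTime n (conditionOn (iidK k Y P n) (D n)))
      (fun ω => x (tupleSeq k Y ω.1 ω.2)) (UvarCM k Y n (φ n) j)
      fun ω => z (tupleSeq k Y ω.1 ω.2)) atTop (nhds 0) := by
  have hPMF : ∀ n, 0 < probSet (iidK k Y P n) (D n) →
      IsPMF (conditionOn (iidK k Y P n) (D n)) := fun n => isPMF_conditionOn (isPMF_iidK hP n).1
  refine tendsto_of_tendsto_of_tendsto_of_le_of_le' tendsto_const_nhds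
    (by simpa only [neg_zero] using hexp.neg) ?_ ?_
  · filter_upwards [hpos] with n hD
    exact condMIOf_nonneg (withUniformTime_nonneg (hPMF n hD).1) _ _ _
  · filter_upwards [hpos, eventually_ne_atTop 0] with n hD hn
    refine h.condMIOf_withUniformTime_le hn hP (hPMF n hD) hD (fun v => ?_) hz
      (UvarCM_factorsThrough_history (φ n) j)
    rw [← probEq_tupleSeq_iidK]
    exact probSet_mul_probEq_conditionOn_le (isPMF_iidK hP n).1 hD (tupleSeq k Y) v

end KHop

section Liminf

variable {u : ℕ → ℝ}

theorem exists_pos_eventually_le_of_liminf_pos (hu : ∀ n, 0 ≤ u n) (h : 0 < liminf u atTop) :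
    ∃ c, 0 < c ∧ ∀ᶠ n in atTop, c ≤ u n := by
  obtain ⟨c, hc, hcu⟩ := exists_between h
  exact ⟨c, hc, (eventually_lt_of_lt_liminf hcu (isBoundedUnder_of ⟨0, hu⟩)).mono fun _ => le_of_lt⟩

theorem tendsto_logb_div_nhds_zero {c : ℝ} (hc : 0 < c) (hcu : ∀ᶠ n in atTop, c ≤ u n)
    (hu : ∀ n, u n ≤ 1) : Tendsto (fun n => Real.logb 2 (u n) / n) atTop (nhds 0) := by
  refine tendsto_of_tendsto_of_tendsto_of_le_of_le'
    (tendsto_const_div_atTop_nhds_zero_nat (Real.logb 2 c)) tendsto_const_nhds ?_ ?_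
  · filter_upwards [hcu] with n hn
    gcongr
    exact one_lt_two
  · filter_upwards [hcu] with n hn
    exact div_nonpos_of_nonpos_of_nonneg
      (Real.logb_nonpos one_lt_two (hc.le.trans hn) (hu n)) n.cast_nonneg

end Liminf

theorem asymptotic_markov_later_hops_general
    (k : ℕ) (Y : ℕ → Type) [∀ i, Fintype (Y i)] [∀ i, Nonempty (Y i)]
    (P : (∀ i : Fin (k + 1), Y i) → ℝ) (hP : IsPMF P) (hMC : IsMarkovChainK k Y P)
    (φ : ∀ n ℓ : ℕ, (Fin n → Y ℓ) → ℕ → ℕ) (D : ∀ n, Set (∀ i : Fin (k + 1), Fin n → Y i))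
    (hpos : ∀ᶠ n in atTop, 0 < probSet (iidK k Y P n) (D n))
    (hexp : Tendsto (fun n => Real.logb 2 (probSet (iidK k Y P n) (D n)) / n) atTop (nhds 0))
    (j : Fin k) :
    Tendsto (fun n => condMIOf (withUniformTime n (conditionOn (iidK k Y P n) (D n)))
        (fun ω => (fun i : {i : Fin (k + 1) // (j : ℕ) + 1 ≤ (i : ℕ)} => ω.1 i.1 ω.2))
        (UvarCM k Y n (φ n) j)
        (fun ω => (fun i : {i : Fin (k + 1) // (i : ℕ) ≤ (j : ℕ)} => ω.1 i.1 ω.2)))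
      atTop (nhds 0) ∧
    Tendsto (fun n => condMIOf (withUniformTime n (conditionOn (iidK k Y P n) (D n)))
        (UvarCM k Y n (φ n) j)
        (fun ω => ω.1 (idxHi k j) ω.2)
        (fun ω => ω.1 (idxLo k j) ω.2)) atTop (nhds 0) := by
  refine ⟨CondLawEq.tendsto_condMIOf_UvarCM
    (x := fun y (i : {i : Fin (k + 1) // (j : ℕ) + 1 ≤ (i : ℕ)}) => y i.1)
    (fun _ => rfl) (fun _ _ => id) hP φ hpos hexp, ?_⟩
  simp only [condMIOf_comm _ (UvarCM k Y _ (φ _) j)]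
  exact (hMC.condLawEq hP.1 j).tendsto_condMIOf_UvarCM
    (fun _ _ h => congrFun h ⟨idxLo k j, le_rfl⟩) hP φ hpos hexp

/-- asymptotic Markov chains at later hops. Under the `K`-hop change of
measure with `liminf_n Δ_k > 0`, and with `U_ℓ := (M̃_ℓ, Ỹ₀^{T−1},…,Ỹ_k^{T−1}, T)` and
`Ỹ_j := Ỹ_{j,T}`, for every `ℓ ∈ {2,…,k}` (here `ℓ = j+1` with `1 ≤ j`):
`lim_n I(Ỹ_ℓ,…,Ỹ_k; U_ℓ | Ỹ₀,…,Ỹ_{ℓ−1}) = 0`, and consequently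
`lim_n I(U_ℓ; Ỹ_ℓ | Ỹ_{ℓ−1}) = 0`. -/
theorem asymptotic_markov_later_hops
    (k : ℕ) (Y : ℕ → Type) [∀ i, Fintype (Y i)] [∀ i, Nonempty (Y i)]
    (hk : 1 ≤ k)
    (P : (∀ i : Fin (k + 1), Y i) → ℝ) (hP : IsPMF P) (hMC : IsMarkovChainK k Y P)
    (φ : ∀ n : ℕ, ∀ ℓ : ℕ, (Fin n → Y ℓ) → ℕ → ℕ)
    (g : ∀ n : ℕ, (Fin n → Y k) → ℕ → Bool)
    (hΔ : 0 < liminf (fun n => DeltaCM k Y P n (φ n) (g n)) atTop) :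
    ∀ j : Fin k, 1 ≤ (j : ℕ) →
      Tendsto (fun n => condMIOf (pfullCM k Y P n (φ n) (g n))
          (fun ω => (fun i : {i : Fin (k + 1) // (j : ℕ) + 1 ≤ (i : ℕ)} => ω.1 i.1 ω.2))
          (UvarCM k Y n (φ n) (j : ℕ))
          (fun ω => (fun i : {i : Fin (k + 1) // (i : ℕ) ≤ (j : ℕ)} => ω.1 i.1 ω.2)))
        atTop (nhds 0) ∧
      Tendsto (fun n => condMIOf (pfullCM k Y P n (φ n) (g n))
          (UvarCM k Y n (φ n) (j : ℕ))
          (fun ω => ω.1 (idxHi k j) ω.2)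
          (fun ω => ω.1 (idxLo k j) ω.2)) atTop (nhds 0) := by
  obtain ⟨c, hc, hcΔ⟩ := exists_pos_eventually_le_of_liminf_pos
    (fun n => probSet_nonneg (isPMF_iidK hP n).1 (DsetCM k Y P n (φ n) (g n))) hΔ
  exact fun j _ => asymptotic_markov_later_hops_general k Y P hP hMC φ
    (fun n => DsetCM k Y P n (φ n) (g n)) (hcΔ.mono fun _ => hc.trans_le)
    (tendsto_logb_div_nhds_zero hc hcΔ fun n => probSet_le_one (isPMF_iidK hP n) _) j
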